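/- Let G be a finite simple graph, let T be a thread of G with end-vertices x and y (possibly x = y), let T' = T − {x,y}, and let G' = G − V(T'). Suppose v(T') ∈ {3k, 3k+1} for some integer k ≥ 1. If λ(G') ≥ v(G')/4, then λ(G) ≥ v(G)/4. -/

import Mathlib

/-- `H` is a path with `k` edges (a "k-edge path"), as a subgraph of `G`. -/
def SimpleGraph.Subgraph.IsKEdgePath {V : Type*} {G : SimpleGraph V}
    (H : G.Subgraph) (k : ℕ) : Prop :=
  ∃ (u v : V) (w : G.Walk u v), w.IsPath ∧ w.length = k ∧ H = w.toSubgraph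

/-- `H` is a tree with `k` edges (a "k-edge tree"), as a subgraph of `G`. -/
def SimpleGraph.Subgraph.IsKEdgeTree {V : Type*} {G : SimpleGraph V}
    (H : G.Subgraph) (k : ℕ) : Prop :=
  H.coe.IsTree ∧ H.edgeSet.ncard = k

/-- The maximum number of pairwise vertex-disjoint `k`-edge paths in `G`. -/
noncomputable def SimpleGraph.lambdaK {V : Type*} (G : SimpleGraph V) (k : ℕ) : ℕ :=
  sSup {n | ∃ P : Finset G.Subgraph,
    (∀ H ∈ P, H.IsKEdgePath k) ∧
    (P : Set G.Subgraph).Pairwise (fun H H' => Disjoint H.verts H'.verts) ∧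
    P.card = n}

/-- The maximum number of pairwise vertex-disjoint `k`-edge trees in `G`. -/
noncomputable def SimpleGraph.tauK {V : Type*} (G : SimpleGraph V) (k : ℕ) : ℕ :=
  sSup {n | ∃ P : Finset G.Subgraph,
    (∀ H ∈ P, H.IsKEdgeTree k) ∧
    (P : Set G.Subgraph).Pairwise (fun H H' => Disjoint H.verts H'.verts) ∧
    P.card = n}

/-- A path-thread of `G`: a maximal path in `G` such that every vertex having degree
two in the path also has degree two in `G`. -/
def SimpleGraph.IsPathThread {V : Type*} (G : SimpleGraph V) {x y : V}
    (w : G.Walk x y) : Prop :=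
  w.IsPath ∧
  (∀ v : V, (w.toSubgraph.neighborSet v).ncard = 2 → (G.neighborSet v).ncard = 2) ∧
  ∀ (x' y' : V) (w' : G.Walk x' y'), w'.IsPath →
    (∀ v : V, (w'.toSubgraph.neighborSet v).ncard = 2 → (G.neighborSet v).ncard = 2) →
    w.toSubgraph ≤ w'.toSubgraph → w.toSubgraph = w'.toSubgraph

/-- A thread of `G` with end-vertices `x` and `y` (possibly `x = y`): either a
path-thread, or (when `y = x`) a cycle-thread, i.e. a cycle all of whose vertices
except the distinguished vertex `x` have degree two in `G`. -/
def SimpleGraph.IsThread {V : Type*} (G : SimpleGraph V) {x y : V}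
    (w : G.Walk x y) : Prop :=
  G.IsPathThread w ∨
  ∃ h : y = x, (w.copy rfl h).IsCycle ∧
    ∀ v ∈ w.support, v ≠ x → (G.neighborSet v).ncard = 2

/-!
The interior `T'` of a thread is the vertex set of a path, and a path on at least `(n + 1) * k`
vertices can be cut into `k` consecutive `n`-edge paths. These `k` paths and an optimal packing of
`G - V(T')` live on complementary vertex sets, so `k + λ(G') ≤ λ(G)`, while `T'` has at most
`4 * k` vertices.
-/

open SimpleGraph

section PathPacking

variable {V W ι κ : Type*} {G : SimpleGraph V} {G' : SimpleGraph W} {n : ℕ}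

/-- A family of pairwise vertex-disjoint `n`-edge paths of `G`. The packings counted by `lambdaK`
are finite sets of subgraphs; indexed families are easier to combine, and they have the same sizes
because disjoint nonempty subgraphs are distinct. -/
structure IsPathPacking (G : SimpleGraph V) (n : ℕ) (f : ι → G.Subgraph) : Prop where
  isKEdgePath : ∀ i, (f i).IsKEdgePath n
  disjoint_verts : Pairwise fun i j ↦ Disjoint (f i).verts (f j).verts

theorem verts_nonempty_of_isKEdgePath {H : G.Subgraph} (hH : H.IsKEdgePath n) :
    H.verts.Nonempty := by
  obtain ⟨u, -, p, -, -, rfl⟩ := hH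
  exact ⟨u, p.start_mem_verts_toSubgraph⟩

theorem isKEdgePath_map {H : G.Subgraph} (hH : H.IsKEdgePath n) {φ : G →g G'}
    (hφ : Function.Injective φ) : (H.map φ).IsKEdgePath n := by
  obtain ⟨u, v, p, hp, hlen, rfl⟩ := hH
  exact ⟨φ u, φ v, p.map φ, hp.map hφ, by rw [Walk.length_map, hlen],
    (p.toSubgraph_map φ).symm⟩

namespace IsPathPacking

theorem injective {f : ι → G.Subgraph} (hf : IsPathPacking G n f) : Function.Injective f := by
  intro i j hij
  by_contra hne
  have hdisj : Disjoint (f i).verts (f j).verts := hf.disjoint_verts hne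
  rw [hij, disjoint_self] at hdisj
  exact (verts_nonempty_of_isKEdgePath (hf.isKEdgePath j)).ne_empty hdisj

theorem map {f : ι → G.Subgraph} (hf : IsPathPacking G n f) {φ : G →g G'}
    (hφ : Function.Injective φ) : IsPathPacking G' n fun i ↦ (f i).map φ where
  isKEdgePath i := isKEdgePath_map (hf.isKEdgePath i) hφ
  disjoint_verts _ _ hij := (Set.disjoint_image_iff hφ).mpr (hf.disjoint_verts hij)

theorem sumElim {f : ι → G.Subgraph} {g : κ → G.Subgraph} (hf : IsPathPacking G n f)
    (hg : IsPathPacking G n g) (hfg : ∀ i j, Disjoint (f i).verts (g j).verts) :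
    IsPathPacking G n (Sum.elim f g) where
  isKEdgePath := Sum.rec hf.isKEdgePath hg.isKEdgePath
  disjoint_verts := by
    rintro (i | i) (j | j) hij
    · exact hf.disjoint_verts (ne_of_apply_ne Sum.inl hij)
    · exact hfg i j
    · exact (hfg j i).symm
    · exact hg.disjoint_verts (ne_of_apply_ne Sum.inr hij)

end IsPathPacking

theorem bddAbove_card_pathPacking [Finite V] (G : SimpleGraph V) (n : ℕ) :
    BddAbove {m | ∃ P : Finset G.Subgraph, (∀ H ∈ P, H.IsKEdgePath n) ∧
      (P : Set G.Subgraph).Pairwise (fun H H' => Disjoint H.verts H'.verts) ∧ P.card = m} := by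
  have := Fintype.ofFinite G.Subgraph
  refine ⟨Fintype.card G.Subgraph, ?_⟩
  rintro m ⟨P, -, -, rfl⟩
  exact P.card_le_univ

theorem IsPathPacking.card_le_lambdaK [Finite V] {f : ι → G.Subgraph}
    (hf : IsPathPacking G n f) : Nat.card ι ≤ G.lambdaK n := by
  have := Finite.of_injective f hf.injective
  have := Fintype.ofFinite ι
  refine le_csSup (bddAbove_card_pathPacking G n)
    ⟨Finset.univ.map ⟨f, hf.injective⟩, ?_, ?_, ?_⟩
  · simpa using hf.isKEdgePath
  · rw [Finset.coe_map, Finset.coe_univ, Set.image_univ]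
    rintro _ ⟨i, rfl⟩ _ ⟨j, rfl⟩ hij
    exact hf.disjoint_verts (ne_of_apply_ne f hij)
  · rw [Finset.card_map, Finset.card_univ, Nat.card_eq_fintype_card]

theorem exists_isPathPacking_lambdaK [Finite V] (G : SimpleGraph V) (n : ℕ) :
    ∃ f : Fin (G.lambdaK n) → G.Subgraph, IsPathPacking G n f := by
  have hbdd := bddAbove_card_pathPacking G n
  obtain ⟨P, hpath, hdisj, hcard⟩ := Nat.sSup_mem (by exact ⟨0, ∅, by simp⟩) hbdd
  let e := P.equivFinOfCardEq hcard
  exact ⟨fun i ↦ e.symm i, fun i ↦ hpath _ (e.symm i).2, fun i j hij ↦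
    hdisj (e.symm i).2 (e.symm j).2 fun h ↦ hij (e.symm.injective (Subtype.ext h))⟩

theorem lambdaK_induce_add_lambdaK_induce_le [Finite V] (G : SimpleGraph V) (n : ℕ)
    {s t : Set V} (hst : Disjoint s t) :
    (G.induce s).lambdaK n + (G.induce t).lambdaK n ≤ G.lambdaK n := by
  obtain ⟨f, hf⟩ := exists_isPathPacking_lambdaK (G.induce s) n
  obtain ⟨g, hg⟩ := exists_isPathPacking_lambdaK (G.induce t) n
  have verts_subset (r : Set V) (H : (G.induce r).Subgraph) :
      (H.map (Embedding.induce r).toHom).verts ⊆ r := by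
    rintro _ ⟨v, -, rfl⟩
    exact v.2
  have hfg := (hf.map (φ := (Embedding.induce s).toHom) Subtype.val_injective).sumElim
    (hg.map (φ := (Embedding.induce t).toHom) Subtype.val_injective)
    fun i j ↦ hst.mono (verts_subset s (f i)) (verts_subset t (g j))
  simpa using hfg.card_le_lambdaK

end PathPacking

section PathSegments

variable {V : Type*} {G : SimpleGraph V} {a b : V} {p : G.Walk a b}

theorem exists_getVert_of_mem_support_take_drop {i n : ℕ} {v : V}
    (hv : v ∈ ((p.drop i).take n).support) :
    ∃ j, i ≤ j ∧ j ≤ i + n ∧ p.getVert j = v := by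
  obtain ⟨j, rfl, hj⟩ := Walk.mem_support_iff_exists_getVert.mp hv
  rw [Walk.take_length, Walk.drop_length] at hj
  refine ⟨i + j, by lia, by lia, ?_⟩
  rw [Walk.take_getVert, Walk.drop_getVert, min_eq_right (by lia)]

theorem isPathPacking_segments (hp : p.IsPath) {n m : ℕ} (hlen : (n + 1) * m ≤ p.length + 1) :
    IsPathPacking G n fun i : Fin m ↦ ((p.drop ((n + 1) * i)).take n).toSubgraph := by
  have segment_le (i : Fin m) : (n + 1) * i + n ≤ p.length := by
    have := Nat.mul_le_mul_left (n + 1) (Nat.succ_le_of_lt i.2)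
    lia
  refine ⟨fun i ↦ ⟨_, _, _, (hp.drop _).take n, ?_, rfl⟩, fun i j hij ↦ ?_⟩
  · rw [Walk.take_length, Walk.drop_length, min_eq_left (Nat.le_sub_of_add_le' (segment_le i))]
  · refine Set.disjoint_left.mpr fun v hvi hvj ↦ hij (Fin.ext ?_)
    obtain ⟨q, hqi, hqi', rfl⟩ := exists_getVert_of_mem_support_take_drop
      ((Walk.mem_verts_toSubgraph _).mp hvi)
    obtain ⟨r, hrj, hrj', hrq⟩ := exists_getVert_of_mem_support_take_drop
      ((Walk.mem_verts_toSubgraph _).mp hvj)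
    obtain rfl : r = q := hp.getVert_injOn (hrj'.trans (segment_le j))
      (hqi'.trans (segment_le i)) hrq
    -- Both `i` and `j` are the quotient of `r` by `n + 1`.
    rw [← Nat.div_eq_of_lt_le (m := r) (n := n + 1) (k := i) (by lia) (by lia),
      Nat.div_eq_of_lt_le (m := r) (n := n + 1) (k := j) (by lia) (by lia)]

theorem le_lambdaK_of_isPath [Finite V] (hp : p.IsPath) {n m : ℕ}
    (hlen : (n + 1) * m ≤ p.length + 1) : m ≤ G.lambdaK n := by
  simpa using (isPathPacking_segments hp hlen).card_le_lambdaK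

theorem ncard_support_of_isPath (hp : p.IsPath) : {v | v ∈ p.support}.ncard = p.length + 1 := by
  classical
  rw [← List.coe_toFinset, Set.ncard_coe_finset, List.toFinset_card_of_nodup hp.support_nodup,
    Walk.length_support]

theorem le_lambdaK_induce_support [Finite V] (hp : p.IsPath) {n m : ℕ}
    (hlen : (n + 1) * m ≤ p.length + 1) : m ≤ (G.induce {v | v ∈ p.support}).lambdaK n := by
  have hmap := p.map_induce (s := {v | v ∈ p.support}) fun _ ↦ id
  refine le_lambdaK_of_isPath (p := p.induce {v | v ∈ p.support} fun _ ↦ id)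
    (.of_map (hmap.symm ▸ hp)) ?_
  rwa [← Walk.length_map (Embedding.induce {v | v ∈ p.support}).toHom, hmap]

end PathSegments

section ThreadInterior

variable {V : Type*} {G : SimpleGraph V} {x y : V} {w : G.Walk x y}

theorem not_nil_of_mem_support_of_ne_end {v : V} (hv : v ∈ w.support) (hvy : v ≠ y) : ¬w.Nil := by
  cases w with
  | nil => exact absurd (by simpa using hv) hvy
  | cons => exact Walk.not_nil_cons

theorem mem_support_dropLast_iff_of_isPath (hw : w.IsPath) (hnil : ¬w.Nil) {v : V} :
    v ∈ w.dropLast.support ↔ v ∈ w.support ∧ v ≠ y := by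
  have hnodup := hw.support_nodup
  rw [← Walk.support_dropLast_concat hnil] at hnodup ⊢
  grind

theorem isPath_tail_of_isThread (hw : G.IsThread w) : w.tail.IsPath := by
  rcases hw with hpath | ⟨rfl, hcycle, -⟩
  · exact hpath.1.tail
  · exact hcycle.isPath_tail

theorem ne_start_of_mem_support_tail_of_isThread (hw : G.IsThread w) {v : V}
    (hv : v ∈ w.tail.support) (hvy : v ≠ y) : v ≠ x := by
  rcases hw with hpath | ⟨rfl, -⟩
  · cases w with
    | nil => exact absurd (by simpa using hv) hvy
    | cons h q =>
      rintro rfl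
      exact ((Walk.cons_isPath_iff h q).mp hpath.1).2 (by simpa using hv)
  · exact hvy

theorem exists_isPath_support_eq_interior_of_isThread (hw : G.IsThread w)
    (hne : {v | v ∈ w.support ∧ v ≠ x ∧ v ≠ y}.Nonempty) :
    ∃ (a b : V) (p : G.Walk a b), p.IsPath ∧
      {v | v ∈ w.support ∧ v ≠ x ∧ v ≠ y} = {v | v ∈ p.support} := by
  obtain ⟨u, hu, hux, huy⟩ := hne
  have hnil := not_nil_of_mem_support_of_ne_end hu huy
  have mem_support_iff (v : V) : v ∈ w.support ↔ v = x ∨ v ∈ w.tail.support := by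
    rw [← Walk.cons_support_tail hnil, List.mem_cons]
  have hnil' : ¬w.tail.Nil :=
    not_nil_of_mem_support_of_ne_end (((mem_support_iff u).mp hu).resolve_left hux) huy
  have htail := isPath_tail_of_isThread hw
  refine ⟨_, _, w.tail.dropLast, htail.dropLast, Set.ext fun v ↦ ?_⟩
  have := ne_start_of_mem_support_tail_of_isThread hw (v := v)
  rw [Set.mem_ofPred_eq, Set.mem_ofPred_eq, mem_support_dropLast_iff_of_isPath htail hnil',
    mem_support_iff]
  tauto

end ThreadInterior

theorem stmt_8_general {V : Type*} [Finite V] (G : SimpleGraph V) {a b : V} (p : G.Walk a b)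
    (hp : p.IsPath) (S : Set V) (hS : S = {v | v ∈ p.support}) (n k c : ℕ)
    (hlower : (n + 1) * k ≤ S.ncard) (hupper : S.ncard ≤ c * k)
    (hG' : (Sᶜ.ncard : ℚ) / c ≤ (G.induce Sᶜ).lambdaK n) :
    (Nat.card V : ℚ) / c ≤ G.lambdaK n := by
  have hncard : S.ncard = p.length + 1 := hS ▸ ncard_support_of_isPath hp
  have hc : (0 : ℚ) < c := by
    exact_mod_cast Nat.pos_of_ne_zero (by rintro rfl; lia)
  have hk : k ≤ (G.induce S).lambdaK n := hS ▸ le_lambdaK_induce_support hp (hncard ▸ hlower)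
  have hsum : k + (G.induce Sᶜ).lambdaK n ≤ G.lambdaK n :=
    (Nat.add_le_add_right hk _).trans
      (lambdaK_induce_add_lambdaK_induce_le G n disjoint_compl_right)
  have hupper' : (S.ncard : ℚ) / c ≤ k := (div_le_iff₀' hc).mpr (by exact_mod_cast hupper)
  calc (Nat.card V : ℚ) / c
      = S.ncard / c + Sᶜ.ncard / c := by
        rw [← Set.ncard_add_ncard_compl S, Nat.cast_add, add_div]
    _ ≤ k + (G.induce Sᶜ).lambdaK n := add_le_add hupper' hG'
    _ ≤ G.lambdaK n := by exact_mod_cast hsum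

/-- Let `G` be a finite simple graph, `T` a thread of `G` with end-vertices `x` and
`y` (possibly `x = y`), `T' = T − {x,y}`, `G' = G − V(T')`, and suppose
`v(T') ∈ {3k, 3k+1}` for some `k ≥ 1`.  If `λ(G') ≥ v(G')/4`, then
`λ(G) ≥ v(G)/4`. -/
theorem stmt_8 {V : Type} [Fintype V]
    (G : SimpleGraph V) {x y : V} (w : G.Walk x y) (hw : G.IsThread w)
    (S : Set V) (hS : S = {v : V | v ∈ w.support ∧ v ≠ x ∧ v ≠ y})
    (k : ℕ) (hk : 1 ≤ k) (hcard : S.ncard = 3 * k ∨ S.ncard = 3 * k + 1)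
    (hG' : ((G.induce Sᶜ).lambdaK 2 : ℚ) ≥ (Sᶜ.ncard : ℚ) / 4) :
    (G.lambdaK 2 : ℚ) ≥ (Fintype.card V : ℚ) / 4 := by
  have hne : S.Nonempty := Set.nonempty_of_ncard_ne_zero (by lia)
  obtain ⟨a, b, p, hp, hp_support⟩ := exists_isPath_support_eq_interior_of_isThread hw (hS ▸ hne)
  simpa using stmt_8_general G p hp S (hS.trans hp_support) 2 k 4 (by lia) (by lia)
    (by simpa using hG')
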